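/- Let A = (A_1,…,A_n) be a nonnegative vector in ℝ^n with D = n + A_1 + ⋯ + A_n > 1. Then for every continuously differentiable function f : ℝ^n → ℝ with compact support satisfying ∫_{ℝ^n_A} |f| x^A dx = 1, one has ∫_{ℝ^n_A} |f| log|f| x^A dx ≤ D · log( C_{1,n,A} ∫_{ℝ^n_A} |∇f| x^A dx ), where C_{1,n,A} = D^{−1} ( 2^k Γ(1+D/2) / (∏_{i=1}^n Γ((A_i+1)/2)) )^{1/D}. -/

import Mathlib

open MeasureTheory Real Filter

noncomputable section

/-- The positivity region `ℝ^n_A = {x : x_i > 0 whenever A_i > 0}`. -/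
def monSet {ι : Type*} [Fintype ι] (A : ι → ℝ) : Set (EuclideanSpace ℝ ι) :=
  {x | ∀ i, 0 < A i → 0 < x i}

/-- The monomial weight `x^A = ∏ |x_i|^{A_i}`. -/
def monWeight {ι : Type*} [Fintype ι] (A : ι → ℝ) (x : EuclideanSpace ℝ ι) : ℝ :=
  ∏ i, |x i| ^ A i

/-- The homogeneous dimension `D = n + A_1 + ⋯ + A_n`. -/
def monDim {ι : Type*} [Fintype ι] (A : ι → ℝ) : ℝ :=
  (Fintype.card ι : ℝ) + ∑ i, A i

/-- `k = #{i : A_i > 0}`. -/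
def monK {ι : Type*} [Fintype ι] (A : ι → ℝ) : ℕ :=
  Nat.card {i : ι // 0 < A i}

/-- `Π(A) = [ (∏ Γ((A_i+1)/2)) / 2^k ]^{2/D}`. -/
def monPi {ι : Type*} [Fintype ι] (A : ι → ℝ) : ℝ :=
  ((∏ i, Gamma ((A i + 1) / 2)) / 2 ^ monK A) ^ (2 / monDim A)

/-- `C_{1,n,A}`, the sharp constant for `p = 1`. -/
def monC1 {ι : Type*} [Fintype ι] (A : ι → ℝ) : ℝ :=
  (monDim A)⁻¹ *
    ((2 ^ monK A * Gamma (1 + monDim A / 2)) / ∏ i, Gamma ((A i + 1) / 2)) ^ (1 / monDim A)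

open scoped ENNReal Pointwise

theorem volume_image_affine {a : ℝ} (ha : 0 ≤ a) (c : ℝ) (K : Set ℝ) :
    volume ((fun x => a * x + c) '' K) = ENNReal.ofReal a * volume K := by
  have : (fun x : ℝ => a * x + c) '' K = (fun x => x + c) '' (a • K) := by
    rw [← Set.image_smul, Set.image_image]; rfl
  rw [this, Set.image_add_right, measure_preimage_add_right, Measure.addHaar_smul]
  simp [abs_of_nonneg ha]

/-- The Brunn-Minkowski inequality on the real line. -/
theorem volume_brunn_minkowski_real {a b : ℝ} (ha : 0 ≤ a) (hb : 0 ≤ b) {E F C : Set ℝ}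
    (hE : MeasurableSet E) (hF : MeasurableSet F)
    (hE0 : E.Nonempty) (hF0 : F.Nonempty)
    (h : ∀ x ∈ E, ∀ y ∈ F, a * x + b * y ∈ C) :
    ENNReal.ofReal a * volume E + ENNReal.ofReal b * volume F ≤ volume C := by
  have key : ∀ K ⊆ E, IsCompact K → K.Nonempty → ∀ L ⊆ F, IsCompact L → L.Nonempty →
      ENNReal.ofReal a * volume K + ENNReal.ofReal b * volume L ≤ volume C := by
    intro K hKE hK hK0 L hLF hL hL0
    obtain ⟨x₀, hx₀, hmax⟩ := hK.exists_isMaxOn hK0 continuousOn_id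
    obtain ⟨y₀, hy₀, hmin⟩ := hL.exists_isMinOn hL0 continuousOn_id
    rw [← volume_image_affine ha (b * y₀), ← volume_image_affine hb (a * x₀),
      ← measure_inter_add_sdiff C (measurableSet_Iic (a := a * x₀ + b * y₀))]
    have hdiff : volume (C \ Set.Iic (a * x₀ + b * y₀)) =
        volume (C ∩ Set.Ici (a * x₀ + b * y₀)) := by
      rw [Set.sdiff_eq, Set.compl_Iic]
      exact measure_congr ((ae_eq_refl C).inter Ioi_ae_eq_Ici)
    rw [hdiff]
    refine add_le_add (measure_mono ?_) (measure_mono ?_)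
    · rintro _ ⟨x, hx, rfl⟩
      refine ⟨h x (hKE hx) y₀ (hLF hy₀), ?_⟩
      have : x ≤ x₀ := hmax hx
      simp only [Set.mem_Iic]
      gcongr
    · rintro _ ⟨y, hy, rfl⟩
      refine ⟨by simpa [add_comm] using h x₀ (hKE hx₀) y (hLF hy), ?_⟩
      have : y₀ ≤ y := hmin hy
      simp only [Set.mem_Ici]
      rw [add_comm]
      gcongr
  have approx : ∀ {S : Set ℝ}, MeasurableSet S → S.Nonempty →
      ∃ K : ℕ → Set ℝ, (∀ n, K n ⊆ S ∧ IsCompact (K n) ∧ (K n).Nonempty) ∧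
        Tendsto (fun n => volume (K n)) atTop (nhds (volume S)) := by
    intro S hS ⟨x, hx⟩
    obtain ⟨u, -, hu, huS⟩ := exists_seq_tendsto_sSup
      (S := {m | ∃ K ⊆ S, IsCompact K ∧ K.Nonempty ∧ volume K = m})
      ⟨_, {x}, by simpa using hx, isCompact_singleton, Set.singleton_nonempty x, rfl⟩
      (OrderTop.bddAbove _)
    choose K hKS hK hK0 hKu using huS
    refine ⟨K, fun n => ⟨hKS n, hK n, hK0 n⟩, ?_⟩
    simp_rw [hKu]
    convert hu using 2
    refine le_antisymm (le_of_forall_lt fun r hr => ?_)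
      (sSup_le fun _ ⟨L, hLS, _, _, hL⟩ => hL ▸ measure_mono hLS)
    obtain ⟨L, hLS, hL, hrL⟩ := hS.exists_lt_isCompact hr
    exact hrL.trans_le (le_sSup ⟨L, hLS, hL,
      nonempty_of_measure_ne_zero (ne_bot_of_gt hrL), rfl⟩)
  obtain ⟨K, hK, hKl⟩ := approx hE hE0
  obtain ⟨L, hL, hLl⟩ := approx hF hF0
  refine le_of_tendsto' ((ENNReal.Tendsto.const_mul hKl (Or.inr ENNReal.ofReal_ne_top)).add
    (ENNReal.Tendsto.const_mul hLl (Or.inr ENNReal.ofReal_ne_top))) fun n => ?_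
  exact key _ (hK n).1 (hK n).2.1 (hK n).2.2 _ (hL n).1 (hL n).2.1 (hL n).2.2

theorem prekopa_leindler_real_normalized {a b : ℝ} (ha : 0 < a) (hb : 0 < b) (hab : a + b = 1)
    {f g h : ℝ → ℝ} (hf : Measurable f) (hg : Measurable g) (hh : Measurable h)
    (hf0 : ∀ x, 0 ≤ f x) (hg0 : ∀ x, 0 ≤ g x) (hh0 : ∀ x, 0 ≤ h x)
    (hf1 : ∀ x, f x ≤ 1) (hg1 : ∀ x, g x ≤ 1)
    (hfs : ∀ s < 1, ∃ x, s < f x) (hgs : ∀ s < 1, ∃ x, s < g x)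
    (H : ∀ x y, f x ^ a * g y ^ b ≤ h (a * x + b * y)) :
    ENNReal.ofReal a * (∫⁻ x, ENNReal.ofReal (f x)) +
      ENNReal.ofReal b * (∫⁻ x, ENNReal.ofReal (g x)) ≤ ∫⁻ x, ENNReal.ofReal (h x) := by
  have lc : ∀ {u : ℝ → ℝ}, Measurable u → (∀ x, 0 ≤ u x) → ∫⁻ x, ENNReal.ofReal (u x) =
      ∫⁻ s in Set.Ioi 0, volume {x | s < u x} := fun hu hu0 =>
    lintegral_eq_lintegral_meas_lt _ (Eventually.of_forall hu0) hu.aemeasurable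
  have mono : ∀ u : ℝ → ℝ, Measurable fun s => volume {x | s < u x} := fun u =>
    Antitone.measurable fun s t hst => measure_mono fun x hx => hst.trans_lt hx
  rw [lc hf hf0, lc hg hg0, lc hh hh0, ← lintegral_const_mul _ (mono f),
    ← lintegral_const_mul _ (mono g), ← lintegral_add_left ((mono f).const_mul _)]
  refine setLIntegral_mono (mono h) fun s hs => ?_
  have hs : 0 < s := hs
  rcases lt_or_ge s 1 with h1 | h1
  · refine volume_brunn_minkowski_real ha.le hb.le (measurableSet_lt measurable_const hf)
      (measurableSet_lt measurable_const hg)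
      (hfs s h1) (hgs s h1) fun x hx y hy => ?_
    refine lt_of_lt_of_le ?_ (H x y)
    have hx : s < f x := hx
    have hy : s < g y := hy
    calc s = s ^ a * s ^ b := by rw [← Real.rpow_add hs, hab, Real.rpow_one]
      _ < f x ^ a * g y ^ b := by gcongr
  · have e : ∀ {u : ℝ → ℝ}, (∀ x, u x ≤ 1) → {x | s < u x} = ∅ := fun hu =>
      Set.eq_empty_of_forall_notMem fun x hx => absurd (hx.trans_le ((hu x).trans h1)) (lt_irrefl _)
    rw [e hf1, e hg1]; simp

theorem ENNReal.rpow_mul_rpow_le_add {a b : ℝ} (ha : 0 < a) (hb : 0 < b) (hab : a + b = 1)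
    (u v : ℝ≥0∞) : u ^ a * v ^ b ≤ ENNReal.ofReal a * u + ENNReal.ofReal b * v := by
  have hpq : (a⁻¹).HolderConjugate b⁻¹ := by
    refine Real.holderConjugate_iff.mpr ⟨?_, by simpa using hab⟩
    exact (one_lt_inv₀ ha).mpr (by linarith)
  have := ENNReal.young_inequality (u ^ a) (v ^ b) hpq
  rw [← ENNReal.rpow_mul, ← ENNReal.rpow_mul, mul_inv_cancel₀ ha.ne', mul_inv_cancel₀ hb.ne',
    ENNReal.rpow_one, ENNReal.rpow_one, ENNReal.ofReal_inv_of_pos ha,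
    ENNReal.ofReal_inv_of_pos hb, ENNReal.div_eq_inv_mul, ENNReal.div_eq_inv_mul,
    inv_inv, inv_inv] at this
  exact this

theorem prekopa_leindler_real_bounded {a b : ℝ} (ha : 0 < a) (hb : 0 < b) (hab : a + b = 1)
    {f g h : ℝ → ℝ≥0∞} (hf : Measurable f) (hg : Measurable g) (hh : Measurable h)
    (hfb : ⨆ x, f x ≠ ∞) (hgb : ⨆ x, g x ≠ ∞)
    (H : ∀ x y, f x ^ a * g y ^ b ≤ h (a * x + b * y)) :
    (∫⁻ x, f x) ^ a * (∫⁻ x, g x) ^ b ≤ ∫⁻ x, h x := by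
  set M := ⨆ x, f x with hM
  set N := ⨆ x, g x with hN
  have hfM : ∀ x, f x ≤ M := le_iSup f
  have hgN : ∀ x, g x ≤ N := le_iSup g
  rcases eq_or_ne M 0 with hM0 | hM0
  · have : f = 0 := funext fun x => by simpa [hM0] using hfM x
    simp [this, ha]
  rcases eq_or_ne N 0 with hN0 | hN0
  · have : g = 0 := funext fun x => by simpa [hN0] using hgN x
    simp [this, hb]
  set c := M ^ a * N ^ b with hc
  have hMa0 : M ^ a ≠ 0 := by simp [hM0, hfb]
  have hNb0 : N ^ b ≠ 0 := by simp [hN0, hgb]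
  have hMa : M ^ a ≠ ∞ := ENNReal.rpow_ne_top_of_nonneg ha.le hfb
  have hNb : N ^ b ≠ ∞ := ENNReal.rpow_ne_top_of_nonneg hb.le hgb
  have hc0 : c ≠ 0 := mul_ne_zero hMa0 hNb0
  have hct : c ≠ ∞ := ENNReal.mul_ne_top hMa hNb
  have hf1 : ∀ x, f x / M ≤ 1 := fun x => ENNReal.div_le_of_le_mul (by simpa using hfM x)
  have hg1 : ∀ x, g x / N ≤ 1 := fun x => ENNReal.div_le_of_le_mul (by simpa using hgN x)
  have toReal_le : ∀ {u : ℝ≥0∞}, u ≤ 1 → u.toReal ≤ 1 := fun hu => by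
    simpa using ENNReal.toReal_mono ENNReal.one_ne_top hu
  have sup1 : ∀ {u : ℝ → ℝ≥0∞} {S : ℝ≥0∞}, S = ⨆ x, u x → S ≠ 0 → S ≠ ∞ → ∀ s < (1 : ℝ),
      ∃ x, s < (u x / S).toReal := by
    intro u S hS hS0 hSt s hs
    have hlt : ENNReal.ofReal s * S < ⨆ x, u x := by
      rw [← hS]
      calc ENNReal.ofReal s * S < 1 * S :=
            ENNReal.mul_lt_mul_left hS0 hSt (by simpa using hs)
        _ = S := one_mul S
    obtain ⟨x, hx⟩ := lt_iSup_iff.mp hlt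
    refine ⟨x, ?_⟩
    have hux : u x / S ≠ ∞ :=
      ENNReal.div_ne_top (ne_top_of_le_ne_top hSt (hS ▸ le_iSup u x)) hS0
    rcases lt_or_ge s 0 with hs0 | hs0
    · exact hs0.trans_le ENNReal.toReal_nonneg
    · exact (ENNReal.ofReal_lt_iff_lt_toReal hs0 hux).mp
        ((ENNReal.lt_div_iff_mul_lt (Or.inl hS0) (Or.inl hSt)).mpr hx)
  have key := prekopa_leindler_real_normalized ha hb hab
    (f := fun x => (f x / M).toReal) (g := fun x => (g x / N).toReal)
    (h := fun x => (min (h x / c) 1).toReal)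
    (hf.div_const M).ennreal_toReal (hg.div_const N).ennreal_toReal
    ((hh.div_const c).min measurable_const).ennreal_toReal
    (fun _ => ENNReal.toReal_nonneg) (fun _ => ENNReal.toReal_nonneg)
    (fun _ => ENNReal.toReal_nonneg) (fun x => toReal_le (hf1 x)) (fun x => toReal_le (hg1 x))
    (sup1 hM hM0 hfb) (sup1 hN hN0 hgb) ?_
  · have e1 : ∀ x, ENNReal.ofReal (f x / M).toReal = M⁻¹ * f x := fun x => by
      rw [ENNReal.ofReal_toReal (ne_top_of_le_ne_top ENNReal.one_ne_top (hf1 x)),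
        ENNReal.div_eq_inv_mul]
    have e2 : ∀ x, ENNReal.ofReal (g x / N).toReal = N⁻¹ * g x := fun x => by
      rw [ENNReal.ofReal_toReal (ne_top_of_le_ne_top ENNReal.one_ne_top (hg1 x)),
        ENNReal.div_eq_inv_mul]
    have e3 : ∀ x, ENNReal.ofReal (min (h x / c) 1).toReal ≤ c⁻¹ * h x := fun x => by
      rw [ENNReal.ofReal_toReal (ne_top_of_le_ne_top ENNReal.one_ne_top (min_le_right _ _)),
        ← ENNReal.div_eq_inv_mul]
      exact min_le_left _ _
    simp_rw [e1, e2] at key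
    rw [lintegral_const_mul _ hf, lintegral_const_mul _ hg] at key
    have key2 := (ENNReal.rpow_mul_rpow_le_add ha hb hab _ _).trans
      (key.trans (lintegral_mono e3))
    rw [lintegral_const_mul _ hh, ENNReal.mul_rpow_of_nonneg _ _ ha.le,
      ENNReal.mul_rpow_of_nonneg _ _ hb.le, ENNReal.inv_rpow, ENNReal.inv_rpow,
      mul_mul_mul_comm, ← ENNReal.mul_inv (Or.inl hMa0) (Or.inl hMa)] at key2
    exact (ENNReal.mul_le_mul_iff_right (ENNReal.inv_ne_zero.mpr hct)
      (ENNReal.inv_ne_top.mpr hc0)).mp key2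
  · intro x y
    have hxy : (f x / M) ^ a * (g y / N) ^ b ≤ min (h (a * x + b * y) / c) 1 := by
      refine le_min ?_ ?_
      · rw [ENNReal.div_rpow_of_nonneg _ _ ha.le, ENNReal.div_rpow_of_nonneg _ _ hb.le,
          ENNReal.div_eq_inv_mul, ENNReal.div_eq_inv_mul, mul_mul_mul_comm,
          ← ENNReal.mul_inv (Or.inl hMa0) (Or.inl hMa), ENNReal.div_eq_inv_mul]
        gcongr
        exact H x y
      · exact mul_le_one' (ENNReal.rpow_le_one (hf1 x) ha.le) (ENNReal.rpow_le_one (hg1 y) hb.le)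
    have := ENNReal.toReal_mono
      (ne_top_of_le_ne_top ENNReal.one_ne_top (min_le_right _ _)) hxy
    simpa [ENNReal.toReal_mul, ← ENNReal.toReal_rpow] using this

theorem prekopa_leindler_real {a b : ℝ} (ha : 0 < a) (hb : 0 < b) (hab : a + b = 1)
    {f g h : ℝ → ℝ≥0∞} (hf : Measurable f) (hg : Measurable g) (hh : Measurable h)
    (H : ∀ x y, f x ^ a * g y ^ b ≤ h (a * x + b * y)) :
    (∫⁻ x, f x) ^ a * (∫⁻ x, g x) ^ b ≤ ∫⁻ x, h x := by
  rcases eq_or_ne (∫⁻ x, f x) 0 with hf0 | hf0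
  · simp [hf0, ha]
  rcases eq_or_ne (∫⁻ x, g x) 0 with hg0 | hg0
  · simp [hg0, hb]
  have lim : ∀ {u : ℝ → ℝ≥0∞}, Measurable u →
      Tendsto (fun n : ℕ => ∫⁻ x, min (u x) n) atTop (nhds (∫⁻ x, u x)) := by
    intro u hu
    refine lintegral_tendsto_of_tendsto_of_monotone
      (fun n => (hu.min measurable_const).aemeasurable)
      (Eventually.of_forall fun x m n hmn => min_le_min_left _ (by exact_mod_cast hmn))
      (Eventually.of_forall fun x => ?_)
    simpa using (tendsto_const_nhds (x := u x)).min ENNReal.tendsto_nat_nhds_top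
  refine le_of_tendsto' (ENNReal.Tendsto.mul
    ((ENNReal.continuous_rpow_const (y := a)).continuousAt.tendsto.comp (lim hf))
    (Or.inl (by simp [hf0, ha, ha.not_gt]))
    ((ENNReal.continuous_rpow_const (y := b)).continuousAt.tendsto.comp (lim hg))
    (Or.inl (by simp [hg0, hb.not_gt]))) fun n => ?_
  refine prekopa_leindler_real_bounded ha hb hab (hf.min measurable_const)
    (hg.min measurable_const) hh
    (ne_top_of_le_ne_top (ENNReal.natCast_ne_top n) (iSup_le fun x => min_le_right _ _))
    (ne_top_of_le_ne_top (ENNReal.natCast_ne_top n) (iSup_le fun x => min_le_right _ _))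
    fun x y => le_trans ?_ (H x y)
  gcongr <;> exact min_le_left _ _

theorem prekopa_leindler_pi {a b : ℝ} (ha : 0 < a) (hb : 0 < b) (hab : a + b = 1) (n : ℕ)
    {f g h : (Fin n → ℝ) → ℝ≥0∞} (hf : Measurable f) (hg : Measurable g) (hh : Measurable h)
    (H : ∀ x y, f x ^ a * g y ^ b ≤ h (a • x + b • y)) :
    (∫⁻ x, f x) ^ a * (∫⁻ x, g x) ^ b ≤ ∫⁻ x, h x := by
  induction n with
  | zero =>
    simp only [volume_pi, Measure.pi_of_empty _ (0 : Fin 0 → ℝ), lintegral_dirac]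
    simpa using H 0 0
  | succ n ih =>
    have hcons : Measurable fun p : ℝ × (Fin n → ℝ) => (Fin.cons p.1 p.2 : Fin (n + 1) → ℝ) := by
      refine measurable_pi_iff.mpr (Fin.cases ?_ fun j => ?_)
      · simpa using measurable_fst
      · simpa using by fun_prop
    have fub : ∀ {u : (Fin (n + 1) → ℝ) → ℝ≥0∞}, Measurable u →
        ∫⁻ x, u x = ∫⁻ t, ∫⁻ z, u (Fin.cons t z) := by
      intro u hu
      rw [← (volume_preserving_piFinSuccAbove (fun _ : Fin (n + 1) => ℝ) 0).symm.lintegral_comp hu,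
        Measure.volume_eq_prod, lintegral_prod]
      · simp [MeasurableEquiv.piFinSuccAbove, Fin.consEquiv]
      · exact (hu.comp (MeasurableEquiv.measurable _)).aemeasurable
    rw [fub hf, fub hg, fub hh]
    refine prekopa_leindler_real ha hb hab (hf.comp hcons).lintegral_prod_right'
      (hg.comp hcons).lintegral_prod_right' (hh.comp hcons).lintegral_prod_right' fun s t => ?_
    refine ih (hf.comp (hcons.comp measurable_prodMk_left))
      (hg.comp (hcons.comp measurable_prodMk_left))
      (hh.comp (hcons.comp measurable_prodMk_left)) fun x y => ?_
    convert H (Fin.cons s x) (Fin.cons t y) using 2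
    ext i
    refine Fin.cases ?_ (fun j => ?_) i <;> simp

/-- The Prékopa-Leindler inequality in Euclidean space. -/
theorem prekopa_leindler {a b : ℝ} (ha : 0 < a) (hb : 0 < b) (hab : a + b = 1) {n : ℕ}
    {f g h : EuclideanSpace ℝ (Fin n) → ℝ≥0∞} (hf : Measurable f) (hg : Measurable g)
    (hh : Measurable h) (H : ∀ x y, f x ^ a * g y ^ b ≤ h (a • x + b • y)) :
    (∫⁻ x, f x) ^ a * (∫⁻ x, g x) ^ b ≤ ∫⁻ x, h x := by
  have mp := PiLp.volume_preserving_toLp (Fin n)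
  rw [← mp.lintegral_comp hf, ← mp.lintegral_comp hg, ← mp.lintegral_comp hh]
  exact prekopa_leindler_pi ha hb hab n (hf.comp mp.measurable) (hg.comp mp.measurable)
    (hh.comp mp.measurable) fun x y => H _ _

theorem measurableSet_monSet {ι : Type*} [Fintype ι] (A : ι → ℝ) :
    MeasurableSet (monSet A) := by
  have : monSet A = ⋂ i, {x : EuclideanSpace ℝ ι | 0 < A i → 0 < x i} := by
    ext; simp [monSet]
  rw [this]
  refine MeasurableSet.iInter fun i => ?_
  by_cases h : 0 < A i
  · simpa [h] using measurableSet_lt measurable_const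
      (EuclideanSpace.proj (𝕜 := ℝ) i).continuous.measurable
  · simp [h]

theorem continuous_monWeight {ι : Type*} [Fintype ι] {A : ι → ℝ} (hA : ∀ i, 0 ≤ A i) :
    Continuous (monWeight A) :=
  continuous_finsetProd _ fun i _ =>
    (EuclideanSpace.proj (𝕜 := ℝ) i).continuous.abs.rpow_const fun _ => Or.inr (hA i)

theorem monWeight_nonneg {ι : Type*} [Fintype ι] (A : ι → ℝ) (x : EuclideanSpace ℝ ι) :
    0 ≤ monWeight A x :=
  Finset.prod_nonneg fun _ _ => by positivity

theorem monWeight_smul {ι : Type*} [Fintype ι] (A : ι → ℝ) {c : ℝ} (hc : 0 < c)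
    (x : EuclideanSpace ℝ ι) : monWeight A (c • x) = c ^ (∑ i, A i) * monWeight A x := by
  simp only [monWeight, PiLp.smul_apply, smul_eq_mul, abs_mul, abs_of_pos hc]
  rw [Real.rpow_sum_of_pos hc, ← Finset.prod_mul_distrib]
  exact Finset.prod_congr rfl fun i _ => Real.mul_rpow hc.le (abs_nonneg _)

theorem smul_mem_monSet {ι : Type*} [Fintype ι] {A : ι → ℝ} {c : ℝ} (hc : 0 < c)
    {x : EuclideanSpace ℝ ι} : c • x ∈ monSet A ↔ x ∈ monSet A := by
  simp [monSet, hc]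

theorem combo_mem_monSet {ι : Type*} [Fintype ι] {A : ι → ℝ} {a b : ℝ} (ha : 0 < a) (hb : 0 < b)
    {x y : EuclideanSpace ℝ ι} (hx : x ∈ monSet A) (hy : y ∈ monSet A) :
    a • x + b • y ∈ monSet A := fun i hi => by
  have := hx i hi
  have := hy i hi
  simp only [PiLp.add_apply, PiLp.smul_apply, smul_eq_mul]
  positivity

theorem monWeight_rpow_mul_rpow_le {ι : Type*} [Fintype ι] {A : ι → ℝ} (hA : ∀ i, 0 ≤ A i)
    {a b : ℝ} (ha : 0 < a) (hb : 0 < b) (hab : a + b = 1) {x y : EuclideanSpace ℝ ι}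
    (hx : x ∈ monSet A) (hy : y ∈ monSet A) :
    monWeight A x ^ a * monWeight A y ^ b ≤ monWeight A (a • x + b • y) := by
  unfold monWeight
  rw [← Real.finsetProd_rpow _ _ fun _ _ => by positivity,
    ← Real.finsetProd_rpow _ _ fun _ _ => by positivity, ← Finset.prod_mul_distrib]
  refine Finset.prod_le_prod (fun _ _ => by positivity) fun i _ => ?_
  rcases (hA i).eq_or_lt with h | h
  · simp [← h]
  have hxi := hx i h
  have hyi := hy i h
  simp only [PiLp.add_apply, PiLp.smul_apply, smul_eq_mul]
  have e : 0 < a * x i + b * y i := by positivity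
  rw [abs_of_pos hxi, abs_of_pos hyi, abs_of_pos e, ← Real.rpow_mul hxi.le, ← Real.rpow_mul hyi.le,
    mul_comm (A i) a, mul_comm (A i) b, Real.rpow_mul hxi.le, Real.rpow_mul hyi.le,
    ← Real.mul_rpow (by positivity) (by positivity)]
  gcongr
  exact Real.geom_mean_le_arith_mean2_weighted ha.le hb.le hxi.le hyi.le hab

/-- The measure `x^A dx` on `ℝ^n_A`. -/
def monMeasure {ι : Type*} [Fintype ι] (A : ι → ℝ) : Measure (EuclideanSpace ℝ ι) :=
  (volume.restrict (monSet A)).withDensity fun x => ENNReal.ofReal (monWeight A x)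

theorem isLocallyFiniteMeasure_monMeasure {ι : Type*} [Fintype ι] {A : ι → ℝ}
    (hA : ∀ i, 0 ≤ A i) : IsLocallyFiniteMeasure (monMeasure A) :=
  IsLocallyFiniteMeasure.withDensity_ofReal (continuous_monWeight hA)

theorem integral_monMeasure {ι : Type*} [Fintype ι] {A : ι → ℝ} (hA : ∀ i, 0 ≤ A i)
    (u : EuclideanSpace ℝ ι → ℝ) :
    ∫ x, u x ∂monMeasure A = ∫ x in monSet A, u x * monWeight A x := by
  rw [monMeasure, integral_withDensity_eq_integral_toReal_smul
    (continuous_monWeight hA).measurable.ennreal_ofReal (by simp)]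
  simp [ENNReal.toReal_ofReal (monWeight_nonneg A _), mul_comm]

theorem monMeasure_apply {ι : Type*} [Fintype ι] (A : ι → ℝ)
    {S : Set (EuclideanSpace ℝ ι)} (hS : MeasurableSet S) :
    monMeasure A S =
      ∫⁻ x, (S ∩ monSet A).indicator (fun x => ENNReal.ofReal (monWeight A x)) x := by
  rw [monMeasure, withDensity_apply _ hS, Measure.restrict_restrict hS,
    lintegral_indicator (hS.inter (measurableSet_monSet A))]

theorem monMeasure_preimage_smul {n : ℕ} {A : Fin n → ℝ} (hA : ∀ i, 0 ≤ A i) {c : ℝ} (hc : 0 < c)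
    {S : Set (EuclideanSpace ℝ (Fin n))} (hS : MeasurableSet S) :
    ENNReal.ofReal (c ^ monDim A) * monMeasure A ((c • ·) ⁻¹' S) = monMeasure A S := by
  have hcm : Measurable fun x : EuclideanSpace ℝ (Fin n) => c • x := measurable_const_smul c
  have hw := (continuous_monWeight hA).measurable.ennreal_ofReal
  rw [monMeasure_apply A hS, monMeasure_apply A (hcm hS)]
  set u : EuclideanSpace ℝ (Fin n) → ℝ≥0∞ :=
    (S ∩ monSet A).indicator fun x => ENNReal.ofReal (monWeight A x) with hu
  have hum : Measurable u := hw.indicator (hS.inter (measurableSet_monSet A))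
  have e1 : ∀ x, u (c • x) = ENNReal.ofReal (c ^ ∑ i, A i) *
      ((c • ·) ⁻¹' S ∩ monSet A).indicator (fun x => ENNReal.ofReal (monWeight A x)) x := by
    intro x
    by_cases h : c • x ∈ S ∩ monSet A
    · have h' : x ∈ (c • ·) ⁻¹' S ∩ monSet A := ⟨h.1, (smul_mem_monSet hc).mp h.2⟩
      rw [hu, Set.indicator_of_mem h, Set.indicator_of_mem h', monWeight_smul A hc,
        ENNReal.ofReal_mul (by positivity)]
    · have h' : x ∉ (c • ·) ⁻¹' S ∩ monSet A := fun h' =>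
        h ⟨h'.1, (smul_mem_monSet hc).mpr h'.2⟩
      rw [hu, Set.indicator_of_notMem h, Set.indicator_of_notMem h', mul_zero]
  have e2 : ∫⁻ x, u (c • x) = ENNReal.ofReal ((c ^ n)⁻¹) * ∫⁻ x, u x := by
    rw [← lintegral_map hum hcm, Measure.map_addHaar_smul _ hc.ne', lintegral_smul_measure]
    simp [abs_of_pos hc]
  simp_rw [e1] at e2
  rw [lintegral_const_mul _ (hw.indicator ((hcm hS).inter (measurableSet_monSet A)))] at e2
  have e3 : c ^ monDim A = c ^ n * c ^ ∑ i, A i := by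
    rw [monDim, Real.rpow_add hc, Fintype.card_fin, Real.rpow_natCast]
  rw [e3, ENNReal.ofReal_mul (by positivity), mul_assoc, e2, ← mul_assoc,
    ← ENNReal.ofReal_mul (by positivity), mul_inv_cancel₀ (by positivity), ENNReal.ofReal_one,
    one_mul]

theorem monMeasure_rpow_mul_rpow_le {n : ℕ} {A : Fin n → ℝ} (hA : ∀ i, 0 ≤ A i) {a b : ℝ}
    (ha : 0 < a) (hb : 0 < b) (hab : a + b = 1) {E F G : Set (EuclideanSpace ℝ (Fin n))}
    (hE : MeasurableSet E) (hF : MeasurableSet F) (hG : MeasurableSet G)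
    (h : ∀ x ∈ E, x ∈ monSet A → ∀ y ∈ F, a • x + b • y ∈ G) :
    monMeasure A E ^ a * monMeasure A F ^ b ≤ monMeasure A G := by
  have hw := (continuous_monWeight hA).measurable.ennreal_ofReal
  have hm := measurableSet_monSet A
  rw [monMeasure_apply A hE, monMeasure_apply A hF, monMeasure_apply A hG]
  refine prekopa_leindler ha hb hab (hw.indicator (hE.inter hm)) (hw.indicator (hF.inter hm))
    (hw.indicator (hG.inter hm)) fun x y => ?_
  by_cases hx : x ∈ E ∩ monSet A
  · by_cases hy : y ∈ F ∩ monSet A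
    · have hxy : a • x + b • y ∈ G ∩ monSet A :=
        ⟨h x hx.1 hx.2 y hy.1, combo_mem_monSet ha hb hx.2 hy.2⟩
      rw [Set.indicator_of_mem hx, Set.indicator_of_mem hy, Set.indicator_of_mem hxy,
        ENNReal.ofReal_rpow_of_nonneg (monWeight_nonneg A x) ha.le,
        ENNReal.ofReal_rpow_of_nonneg (monWeight_nonneg A y) hb.le,
        ← ENNReal.ofReal_mul (Real.rpow_nonneg (monWeight_nonneg A x) a)]
      exact ENNReal.ofReal_le_ofReal (monWeight_rpow_mul_rpow_le hA ha hb hab hx.2 hy.2)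
    · simp [Set.indicator_of_notMem hy, hb]
  · simp [Set.indicator_of_notMem hx, ha]

/-- The Brunn-Minkowski inequality for `x^A dx`, for a set and a ball of radius `t`. -/
theorem monMeasure_enlargement {n : ℕ} {A : Fin n → ℝ} (hA : ∀ i, 0 ≤ A i) (hD : 0 < monDim A)
    {E G : Set (EuclideanSpace ℝ (Fin n))} (hE : MeasurableSet E) (hG : MeasurableSet G)
    {m β t : ℝ} (hm : 0 < m) (hβ : 0 < β) (ht : 0 < t) (hEm : monMeasure A E = ENNReal.ofReal m)
    (hball : monMeasure A (Metric.ball 0 1) = ENNReal.ofReal β)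
    (h : ∀ x ∈ E, x ∈ monSet A → ∀ z, dist z x < t → z ∈ G) :
    ENNReal.ofReal ((m ^ (1 / monDim A) + t * β ^ (1 / monDim A)) ^ monDim A) ≤
      monMeasure A G := by
  set D := monDim A
  set p := m ^ (1 / D) with hp
  set q := t * β ^ (1 / D) with hq
  have hp0 : 0 < p := by positivity
  have hq0 : 0 < q := by positivity
  have hpD : p ^ D = m := by rw [hp, one_div, Real.rpow_inv_rpow hm.le hD.ne']
  have hqD : q ^ D = t ^ D * β := by
    rw [hq, Real.mul_rpow ht.le (by positivity), one_div, Real.rpow_inv_rpow hβ.le hD.ne']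
  have hab : p / (p + q) + q / (p + q) = 1 := by field_simp
  have ha : 0 < p / (p + q) := by positivity
  have hb : 0 < q / (p + q) := by positivity
  have cancel : ∀ {c r : ℝ} {S : Set (EuclideanSpace ℝ (Fin n))}, MeasurableSet S → 0 < c →
      monMeasure A S = ENNReal.ofReal (c ^ D * r) →
      monMeasure A ((c • ·) ⁻¹' S) = ENNReal.ofReal r := by
    intro c r S hS hc hSr
    rw [← monMeasure_preimage_smul hA hc hS, ENNReal.ofReal_mul (by positivity)] at hSr
    exact (ENNReal.mul_right_inj (by simp; positivity) ENNReal.ofReal_ne_top).mp hSr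
  have h1 : monMeasure A (((p / (p + q)) • ·) ⁻¹' E) = ENNReal.ofReal ((p + q) ^ D) := by
    refine cancel hE ha ?_
    rw [hEm, Real.div_rpow hp0.le (by positivity), hpD, div_mul_cancel₀ _ (by positivity)]
  have h2 : monMeasure A (((q / (p + q) / t) • ·) ⁻¹' Metric.ball 0 1) =
      ENNReal.ofReal ((p + q) ^ D) := by
    refine cancel measurableSet_ball (by positivity) ?_
    rw [hball, Real.div_rpow hb.le ht.le, Real.div_rpow hq0.le (by positivity), hqD]
    congr 1
    field_simp
  have key := monMeasure_rpow_mul_rpow_le hA ha hb hab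
    ((measurable_const_smul (p / (p + q))) hE)
    ((measurable_const_smul (q / (p + q) / t)) (measurableSet_ball (x := 0) (ε := 1))) hG
    fun x hx hxA y hy => h _ hx ((smul_mem_monSet ha).mpr hxA) _ ?_
  · rw [h1, h2, ← ENNReal.rpow_add _ _ (by simp; positivity) ENNReal.ofReal_ne_top, hab,
      ENNReal.rpow_one] at key
    exact key
  · have hy : (q / (p + q) / t) • y ∈ Metric.ball 0 1 := hy
    rw [mem_ball_zero_iff, norm_smul, Real.norm_of_nonneg (by positivity), div_mul_eq_mul_div,
      div_lt_one ht] at hy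
    simpa [dist_eq_norm, norm_smul, abs_of_pos, hp0, hq0, abs_of_pos (add_pos hp0 hq0)] using hy

theorem lintegral_Ioi_two_mul_mul_exp_neg_sq {r : ℝ} (hr : 0 ≤ r) :
    ∫⁻ u in Set.Ioi r, ENNReal.ofReal (2 * u * exp (-u ^ 2)) = ENNReal.ofReal (exp (-r ^ 2)) := by
  have hd : ∀ u ∈ Set.Ici r, HasDerivAt (fun u => -exp (-u ^ 2)) (2 * u * exp (-u ^ 2)) u := by
    intro u _
    refine ((hasDerivAt_pow 2 u).neg.exp).neg.congr_deriv ?_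
    simp only [Pi.neg_apply]
    push_cast
    ring
  have hnn : ∀ u ∈ Set.Ioi r, 0 ≤ 2 * u * exp (-u ^ 2) := fun u hu => by
    have : 0 < u := hr.trans_lt hu
    positivity
  have hlim : Tendsto (fun u : ℝ => -exp (-u ^ 2)) atTop (nhds (-0)) :=
    (tendsto_exp_atBot.comp (tendsto_neg_atTop_atBot.comp (tendsto_pow_atTop two_ne_zero))).neg
  rw [← ofReal_integral_eq_lintegral_ofReal
    (integrableOn_Ioi_deriv_of_nonneg' hd hnn hlim)
    ((ae_restrict_iff' measurableSet_Ioi).mpr (Eventually.of_forall hnn)),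
    integral_Ioi_of_hasDerivAt_of_nonneg' hd hnn hlim]
  simp

theorem monMeasure_ball {n : ℕ} {A : Fin n → ℝ} (hA : ∀ i, 0 ≤ A i) {r : ℝ} (hr : 0 < r) :
    monMeasure A (Metric.ball 0 r) =
      ENNReal.ofReal (r ^ monDim A) * monMeasure A (Metric.ball 0 1) := by
  rw [← monMeasure_preimage_smul hA hr measurableSet_ball]
  congr 2
  ext x
  simp [norm_smul, abs_of_pos hr, hr]

theorem lintegral_gaussian_eq_ball {n : ℕ} {A : Fin n → ℝ} (hA : ∀ i, 0 ≤ A i)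
    (hD : 0 < monDim A) :
    ∫⁻ x, ENNReal.ofReal (exp (-‖x‖ ^ 2)) ∂monMeasure A =
      ENNReal.ofReal (Gamma (1 + monDim A / 2)) * monMeasure A (Metric.ball 0 1) := by
  have := isLocallyFiniteMeasure_monMeasure hA
  have hg : Measurable fun u : ℝ => ENNReal.ofReal (2 * u * exp (-u ^ 2)) := by fun_prop
  have hset : MeasurableSet {p : EuclideanSpace ℝ (Fin n) × ℝ | ‖p.1‖ < p.2} :=
    measurableSet_lt (by fun_prop) (by fun_prop)
  calc ∫⁻ x, ENNReal.ofReal (exp (-‖x‖ ^ 2)) ∂monMeasure A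
      = ∫⁻ x, (∫⁻ u, {p : EuclideanSpace ℝ (Fin n) × ℝ | ‖p.1‖ < p.2}.indicator
          (fun p => ENNReal.ofReal (2 * p.2 * exp (-p.2 ^ 2))) (x, u)) ∂monMeasure A := by
        refine lintegral_congr fun x => ?_
        rw [← lintegral_Ioi_two_mul_mul_exp_neg_sq (norm_nonneg x),
          ← lintegral_indicator measurableSet_Ioi]
        rfl
    _ = ∫⁻ u, ∫⁻ x, {p : EuclideanSpace ℝ (Fin n) × ℝ | ‖p.1‖ < p.2}.indicator
          (fun p => ENNReal.ofReal (2 * p.2 * exp (-p.2 ^ 2))) (x, u) ∂monMeasure A :=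
        lintegral_lintegral_swap ((hg.comp measurable_snd).indicator hset).aemeasurable
    _ = ∫⁻ u, ENNReal.ofReal (2 * u * exp (-u ^ 2)) * monMeasure A (Metric.ball 0 u) := by
        refine lintegral_congr fun u => ?_
        rw [← lintegral_indicator_const measurableSet_ball]
        refine lintegral_congr fun x => ?_
        simp [Set.indicator]
    _ = ∫⁻ u in Set.Ioi 0, ENNReal.ofReal (2 * (u ^ (monDim A + 1) * exp (-u ^ (2 : ℝ)))) *
          monMeasure A (Metric.ball 0 1) := by
        rw [← lintegral_indicator measurableSet_Ioi]
        refine lintegral_congr fun u => ?_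
        by_cases hu : 0 < u
        · rw [Set.indicator_of_mem (Set.mem_Ioi.mpr hu), monMeasure_ball hA hu, ← mul_assoc,
            ← ENNReal.ofReal_mul (by positivity), Real.rpow_add_one hu.ne', Real.rpow_two]
          congr 2
          ring
        · rw [Set.indicator_of_notMem (by simpa using hu), Metric.ball_eq_empty.mpr (not_lt.mp hu),
            measure_empty, mul_zero]
    _ = _ := by
        rw [lintegral_mul_const _ (by fun_prop), ← ofReal_integral_eq_lintegral_ofReal,
          integral_const_mul, integral_rpow_mul_exp_neg_rpow two_pos (by linarith)]
        · congr 3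
          ring_nf
        · exact (integrableOn_rpow_mul_exp_neg_rpow (by linarith) (by norm_num)).const_mul 2
        · refine (ae_restrict_iff' measurableSet_Ioi).mpr (Eventually.of_forall fun u hu => ?_)
          have : (0 : ℝ) < u := hu
          positivity

/-- The one-dimensional factor of the weighted Gaussian `x^A exp (-‖x‖²)` on `ℝ^n_A`. -/
def monGauss (α t : ℝ) : ℝ :=
  {t : ℝ | 0 < α → 0 < t}.indicator (fun t => |t| ^ α * exp (-t ^ 2)) t

theorem monGauss_nonneg (α t : ℝ) : 0 ≤ monGauss α t :=
  Set.indicator_nonneg (fun _ _ => by positivity) t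

theorem integrable_monGauss_and_integral {α : ℝ} (hα : 0 ≤ α) :
    Integrable (monGauss α) ∧
      ∫ t, monGauss α t = (if 0 < α then (2 : ℝ)⁻¹ else 1) * Gamma ((α + 1) / 2) := by
  rcases hα.eq_or_lt with rfl | h
  · have e : monGauss 0 = fun t => exp (-1 * t ^ 2) := by
      ext t; simp [monGauss]
    rw [e]
    refine ⟨integrable_exp_neg_mul_sq one_pos, ?_⟩
    rw [integral_gaussian]
    simp [← Real.Gamma_one_half_eq]
  · have hs : {t : ℝ | 0 < α → 0 < t} = Set.Ioi 0 := by ext; simp [h]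
    have e : monGauss α = (Set.Ioi 0).indicator fun t => t ^ α * exp (-t ^ (2 : ℝ)) := by
      ext t
      rw [monGauss, hs]
      refine congrFun (Set.indicator_congr fun t ht => ?_) t
      rw [abs_of_pos (Set.mem_Ioi.mp ht), Real.rpow_two]
    rw [e, integrable_indicator_iff measurableSet_Ioi, integral_indicator measurableSet_Ioi,
      integral_rpow_mul_exp_neg_rpow two_pos (by linarith)]
    exact ⟨integrableOn_rpow_mul_exp_neg_rpow (by linarith) (by norm_num), by simp [h]⟩

theorem lintegral_gaussian_eq_prod {n : ℕ} {A : Fin n → ℝ} (hA : ∀ i, 0 ≤ A i) :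
    ∫⁻ x, ENNReal.ofReal (exp (-‖x‖ ^ 2)) ∂monMeasure A =
      ENNReal.ofReal ((∏ i, Gamma ((A i + 1) / 2)) / 2 ^ monK A) := by
  have hw := (continuous_monWeight hA).measurable.ennreal_ofReal
  have e : ∀ x : EuclideanSpace ℝ (Fin n), (monSet A).indicator (fun x =>
      ENNReal.ofReal (monWeight A x) * ENNReal.ofReal (exp (-‖x‖ ^ 2))) x =
      ENNReal.ofReal (∏ i, monGauss (A i) (x i)) := by
    intro x
    by_cases hx : x ∈ monSet A
    · rw [Set.indicator_of_mem hx, ← ENNReal.ofReal_mul (monWeight_nonneg A x), monWeight,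
        EuclideanSpace.real_norm_sq_eq, ← Finset.sum_neg_distrib, Real.exp_sum,
        ← Finset.prod_mul_distrib]
      congr 1
      refine Finset.prod_congr rfl fun i _ => ?_
      rw [monGauss, Set.indicator_of_mem]
      exact hx i
    · rw [Set.indicator_of_notMem hx]
      simp only [monSet, Set.mem_ofPred_eq, not_forall] at hx
      obtain ⟨i, hi, hxi⟩ := hx
      rw [Finset.prod_eq_zero (Finset.mem_univ i), ENNReal.ofReal_zero]
      rw [monGauss, Set.indicator_of_notMem]
      exact fun h => hxi (h hi)
  rw [monMeasure, lintegral_withDensity_eq_lintegral_mul _ hw (by fun_prop),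
    ← lintegral_indicator (measurableSet_monSet A)]
  refine (lintegral_congr e).trans ?_
  rw [← (PiLp.volume_preserving_toLp (Fin n)).lintegral_comp_emb
    (MeasurableEquiv.toLp 2 _).measurableEmbedding,
    ← ofReal_integral_eq_lintegral_ofReal]
  · have h1 := integral_fintype_prod_volume_eq_prod (𝕜 := ℝ) fun (i : Fin n) t => monGauss (A i) t
    simp only
    rw [h1]
    simp_rw [fun i => (integrable_monGauss_and_integral (hA i)).2]
    rw [Finset.prod_mul_distrib, Finset.prod_ite, monK, Nat.card_eq_fintype_card,
      Fintype.card_subtype]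
    simp [div_eq_inv_mul]
  · exact Integrable.fintype_prod fun i => (integrable_monGauss_and_integral (hA i)).1
  · exact Eventually.of_forall fun x => Finset.prod_nonneg fun i _ => monGauss_nonneg _ _

/-- The weighted volume of the unit ball, `∏ Γ((A_i+1)/2) / (2^k Γ(1+D/2))`. -/
theorem monMeasure_unitBall {n : ℕ} {A : Fin n → ℝ} (hA : ∀ i, 0 ≤ A i) (hD : 0 < monDim A) :
    monMeasure A (Metric.ball 0 1) = ENNReal.ofReal
      ((∏ i, Gamma ((A i + 1) / 2)) / (2 ^ monK A * Gamma (1 + monDim A / 2))) := by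
  have hG : 0 < Gamma (1 + monDim A / 2) := Real.Gamma_pos_of_pos (by positivity)
  have h := (lintegral_gaussian_eq_ball hA hD).symm.trans (lintegral_gaussian_eq_prod hA)
  rw [← div_div, ENNReal.ofReal_div_of_pos hG, ← h, mul_comm, ENNReal.mul_div_cancel_right]
  · simpa using hG
  · exact ENNReal.ofReal_ne_top

theorem add_mul_rpow_le_add_rpow {m q D : ℝ} (hm : 0 < m) (hq : 0 ≤ q) (hD : 1 ≤ D) :
    m + D * q * m ^ ((D - 1) / D) ≤ (m ^ (1 / D) + q) ^ D := by
  have hD0 : 0 < D := by linarith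
  set p := m ^ (1 / D) with hp
  have hp0 : 0 < p := by positivity
  have hpD : p ^ D = m := by rw [hp, one_div, Real.rpow_inv_rpow hm.le hD0.ne']
  have hpD1 : m ^ ((D - 1) / D) = p ^ D / p := by
    rw [← Real.rpow_sub_one hp0.ne', hp, ← Real.rpow_mul hm.le]
    congr 1
    field_simp
  have h := one_add_mul_self_le_rpow_one_add (s := q / p) (by
    have : 0 ≤ q / p := by positivity
    linarith) hD
  calc m + D * q * m ^ ((D - 1) / D) = p ^ D * (1 + D * (q / p)) := by
        rw [hpD1, ← hpD]; field_simp
    _ ≤ p ^ D * (1 + q / p) ^ D := by gcongr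
    _ = (p + q) ^ D := by
        rw [← Real.mul_rpow hp0.le (by positivity)]; congr 1; field_simp

theorem monMeasure_add_le_enlargement {n : ℕ} {A : Fin n → ℝ} (hA : ∀ i, 0 ≤ A i)
    (hD : 1 < monDim A) {E G : Set (EuclideanSpace ℝ (Fin n))} (hE : MeasurableSet E)
    (hG : MeasurableSet G) {β t : ℝ} (hβ : 0 < β) (ht : 0 < t) (hEt : monMeasure A E ≠ ∞)
    (hball : monMeasure A (Metric.ball 0 1) = ENNReal.ofReal β)
    (h : ∀ x ∈ E, ∀ z, dist z x < t → z ∈ G) :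
    monMeasure A E + ENNReal.ofReal t * (ENNReal.ofReal (monDim A * β ^ (1 / monDim A)) *
      monMeasure A E ^ ((monDim A - 1) / monDim A)) ≤ monMeasure A G := by
  have hD0 : 0 < monDim A := by linarith
  have he : 0 < (monDim A - 1) / monDim A := div_pos (by linarith) hD0
  rcases eq_or_ne (monMeasure A E) 0 with h0 | h0
  · simp [h0, he]
  set m := (monMeasure A E).toReal with hmdef
  have hm : 0 < m := ENNReal.toReal_pos h0 hEt
  have hEm : monMeasure A E = ENNReal.ofReal m := (ENNReal.ofReal_toReal hEt).symm
  refine le_trans ?_ (monMeasure_enlargement hA hD0 hE hG hm hβ ht hEm hball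
    fun x hx _ => h x hx)
  rw [hEm, ENNReal.ofReal_rpow_of_pos hm, ← ENNReal.ofReal_mul (by positivity),
    ← ENNReal.ofReal_mul ht.le, ← ENNReal.ofReal_add hm.le (by positivity)]
  refine ENNReal.ofReal_le_ofReal (le_trans (le_of_eq ?_)
    (add_mul_rpow_le_add_rpow hm (by positivity : 0 ≤ t * β ^ (1 / monDim A)) hD.le))
  ring

/-- The `L^p` norm is bounded by the integral of the `L^p` norms of the superlevel set indicators. -/
theorem lintegral_rpow_le_lintegral_meas_rpow {α : Type*} [MeasurableSpace α] (μ : Measure α)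
    {u : α → ℝ} (hu : Measurable u) (hu0 : ∀ x, 0 ≤ u x) {p q : ℝ} (hpq : p.HolderConjugate q)
    (h0 : ∫⁻ x, ENNReal.ofReal (u x) ^ p ∂μ ≠ 0) (ht : ∫⁻ x, ENNReal.ofReal (u x) ^ p ∂μ ≠ ∞) :
    (∫⁻ x, ENNReal.ofReal (u x) ^ p ∂μ) ^ (1 / p) ≤
      ∫⁻ s in Set.Ioi 0, μ {x | s < u x} ^ (1 / p) := by
  set N := ∫⁻ x, ENNReal.ofReal (u x) ^ p ∂μ with hN
  have hm : Measurable fun x => ENNReal.ofReal (u x) ^ (p - 1) :=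
    hu.ennreal_ofReal.pow_const _
  have hvq : ∀ x, (ENNReal.ofReal (u x) ^ (p - 1)) ^ q = ENNReal.ofReal (u x) ^ p := fun x => by
    rw [← ENNReal.rpow_mul, hpq.sub_one_mul_conj]
  have hp1 : 0 < p - 1 := hpq.sub_one_pos
  have key : N ≤ ∫⁻ s in Set.Ioi 0, μ {x | s < u x} ^ (1 / p) * N ^ (1 / q) := by
    calc N = ∫⁻ x, ENNReal.ofReal (u x)
          ∂(μ.withDensity fun x => ENNReal.ofReal (u x) ^ (p - 1)) := by
          rw [lintegral_withDensity_eq_lintegral_mul _ hm hu.ennreal_ofReal]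
          refine lintegral_congr fun x => ?_
          rw [Pi.mul_apply]
          nth_rw 3 [← ENNReal.rpow_one (ENNReal.ofReal (u x))]
          rw [← ENNReal.rpow_add_of_nonneg _ _ hp1.le zero_le_one, sub_add_cancel]
      _ = _ := lintegral_eq_lintegral_meas_lt _ (Eventually.of_forall hu0) hu.aemeasurable
      _ ≤ _ := by
          refine lintegral_mono fun s => ?_
          have hs : MeasurableSet {x | s < u x} := measurableSet_lt measurable_const hu
          rw [withDensity_apply _ hs]
          have := ENNReal.lintegral_mul_le_Lp_mul_Lq (μ.restrict {x | s < u x}) hpq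
            (f := fun _ => 1) aemeasurable_const hm.aemeasurable
          simp only [Pi.mul_apply, one_mul, ENNReal.one_rpow, lintegral_one,
            Measure.restrict_apply_univ, hvq] at this
          refine this.trans ?_
          gcongr
          · exact (one_div_pos.mpr hpq.symm.pos).le
          · exact setLIntegral_le_lintegral _ _
  have hanti : Measurable fun s => μ {x | s < u x} :=
    Antitone.measurable fun s t hst => measure_mono fun x hx => hst.trans_lt hx
  have hmono : Measurable fun s => μ {x | s < u x} ^ (1 / p) := hanti.pow_const _
  rw [lintegral_mul_const _ hmono] at key
  have hNq0 : N ^ (1 / q) ≠ 0 := by simp [h0, ht]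
  have hNqt : N ^ (1 / q) ≠ ∞ :=
    ENNReal.rpow_ne_top_of_nonneg (one_div_pos.mpr hpq.symm.pos).le ht
  refine (ENNReal.mul_le_mul_iff_left hNq0 hNqt).mp (le_trans (le_of_eq ?_) key)
  rw [← ENNReal.rpow_add _ _ h0 ht, one_div, one_div, hpq.inv_add_inv_eq_one, ENNReal.rpow_one]

/-- The isoperimetric inequality for `x^A dx`, integrated over the superlevel sets of `|f|`. -/
theorem lintegral_meas_rpow_le_lintegral_fderiv {n : ℕ} {A : Fin n → ℝ} (hA : ∀ i, 0 ≤ A i)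
    (hD : 1 < monDim A) {β : ℝ} (hβ : 0 < β)
    (hball : monMeasure A (Metric.ball 0 1) = ENNReal.ofReal β)
    {f : EuclideanSpace ℝ (Fin n) → ℝ} (hf : ContDiff ℝ 1 f) (hsupp : HasCompactSupport f) :
    ENNReal.ofReal (monDim A * β ^ (1 / monDim A)) *
      (∫⁻ s in Set.Ioi 0, monMeasure A {x | s < |f x|} ^ ((monDim A - 1) / monDim A)) ≤
      ∫⁻ x, ENNReal.ofReal ‖fderiv ℝ f x‖ ∂monMeasure A := by
  have := isLocallyFiniteMeasure_monMeasure hA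
  set μ := monMeasure A with hμ
  set e := (monDim A - 1) / monDim A with he
  have hf' : Continuous (fderiv ℝ f) := hf.continuous_fderiv one_ne_zero
  have hfm : Measurable fun x => |f x| := hf.continuous.abs.measurable
  have huc : UniformContinuous (fderiv ℝ f) :=
    (hsupp.fderiv ℝ).uniformContinuous_of_continuous hf'
  set K := Metric.cthickening 1 (tsupport f) with hK
  have hKc : IsCompact K := hsupp.isCompact.cthickening
  have hKm : MeasurableSet K := hKc.measurableSet
  have hfint : ∫⁻ x, ENNReal.ofReal |f x| ∂μ ≠ ∞ :=
    ((hf.continuous.integrable_of_hasCompactSupport hsupp).abs.lintegral_lt_top).ne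
  have hlevel : ∀ s : ℝ, 0 < s → μ {x | s < |f x|} ≠ ∞ := fun s hs =>
    ne_top_of_le_ne_top hsupp.isCompact.measure_lt_top.ne (measure_mono fun x hx =>
      subset_tsupport f (abs_pos.mp (hs.trans hx)))
  have hanti : Measurable fun s : ℝ => μ {x | s < |f x|} :=
    Antitone.measurable fun s t hst => measure_mono fun x hx => hst.trans_lt hx
  have main : ∀ ε : ℝ, 0 < ε → ENNReal.ofReal (monDim A * β ^ (1 / monDim A)) *
      (∫⁻ s in Set.Ioi 0, μ {x | s < |f x|} ^ e) ≤
      ∫⁻ x, ENNReal.ofReal ‖fderiv ℝ f x‖ ∂μ + ENNReal.ofReal ε * μ K := by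
    intro ε hε
    obtain ⟨δ, hδ, hδε⟩ := Metric.uniformContinuous_iff.mp huc ε hε
    set t := min δ 1 with ht
    have ht0 : 0 < t := lt_min hδ one_pos
    set h : EuclideanSpace ℝ (Fin n) → ℝ :=
      K.indicator fun x => |f x| + t * (‖fderiv ℝ f x‖ + ε) with hh
    have hh0 : ∀ x, 0 ≤ h x := fun x => Set.indicator_nonneg (fun _ _ => by positivity) x
    have hhm : Measurable h := Measurable.indicator
      (hf.continuous.abs.add (continuous_const.mul (hf'.norm.add continuous_const))).measurable hKm
    have hle : ∀ x z, dist x z < t → |f x| ≤ h z := by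
      intro x z hxz
      by_cases hz : z ∈ K
      · rw [hh, Set.indicator_of_mem hz]
        have hx1 : x ∈ Metric.ball z t := hxz
        have := (convex_ball z t).norm_image_sub_le_of_norm_fderiv_le (𝕜 := ℝ) (f := f)
          (C := ‖fderiv ℝ f z‖ + ε) (fun y _ => hf.differentiable one_ne_zero y)
          (fun y hy => ?_) (Metric.mem_ball_self ht0) hx1
        · have h2 : (‖fderiv ℝ f z‖ + ε) * ‖x - z‖ ≤ t * (‖fderiv ℝ f z‖ + ε) := by
            rw [mul_comm, ← dist_eq_norm]
            gcongr
          rw [Real.norm_eq_abs] at this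
          have h3 := abs_sub_abs_le_abs_sub (f x) (f z)
          linarith
        · have h1 := hδε (a := y) (b := z) (lt_of_lt_of_le hy (min_le_left _ _))
          rw [dist_eq_norm] at h1
          have h2 := norm_sub_norm_le (fderiv ℝ f y) (fderiv ℝ f z)
          linarith
      · have : x ∉ tsupport f := fun hx => hz (Metric.mem_cthickening_of_dist_le z x 1 _ hx
          (by rw [dist_comm]; exact hxz.le.trans (min_le_right _ _)))
        rw [image_eq_zero_of_notMem_tsupport this, abs_zero]
        exact hh0 z
    have lower : ∫⁻ x, ENNReal.ofReal |f x| ∂μ + ENNReal.ofReal t *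
        (ENNReal.ofReal (monDim A * β ^ (1 / monDim A)) *
          (∫⁻ s in Set.Ioi 0, μ {x | s < |f x|} ^ e)) ≤ ∫⁻ x, ENNReal.ofReal (h x) ∂μ := by
      rw [lintegral_eq_lintegral_meas_lt μ (Eventually.of_forall hh0) hhm.aemeasurable,
        lintegral_eq_lintegral_meas_lt μ (Eventually.of_forall fun x => abs_nonneg (f x))
          hfm.aemeasurable, ← lintegral_const_mul _ (hanti.pow_const e),
        ← lintegral_const_mul _ ((hanti.pow_const e).const_mul _), ← lintegral_add_left hanti]
      refine setLIntegral_mono' measurableSet_Ioi fun s hs => ?_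
      refine monMeasure_add_le_enlargement hA hD (measurableSet_lt measurable_const hfm)
        (measurableSet_lt measurable_const hhm) hβ ht0 (hlevel s hs) hball
        fun x hx z hz => ?_
      have hx : s < |f x| := hx
      exact hx.trans_le (hle x z (by rwa [dist_comm]))
    have upper : ∫⁻ x, ENNReal.ofReal (h x) ∂μ ≤ ∫⁻ x, ENNReal.ofReal |f x| ∂μ +
        ENNReal.ofReal t *
          (∫⁻ x, ENNReal.ofReal ‖fderiv ℝ f x‖ ∂μ + ENNReal.ofReal ε * μ K) := by
      rw [← lintegral_indicator_const hKm, ← lintegral_add_left hf'.norm.measurable.ennreal_ofReal,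
        ← lintegral_const_mul _ (by fun_prop (disch := exact hKm)),
        ← lintegral_add_left hfm.ennreal_ofReal]
      refine lintegral_mono fun x => ?_
      by_cases hx : x ∈ K
      · simp only [hh, Set.indicator_of_mem hx]
        rw [ENNReal.ofReal_add (abs_nonneg _) (by positivity), ENNReal.ofReal_mul ht0.le,
          ENNReal.ofReal_add (norm_nonneg _) hε.le]
      · simp [hh, Set.indicator_of_notMem hx]
    have h1 := (ENNReal.add_le_add_iff_left hfint).mp (lower.trans upper)
    exact (ENNReal.mul_le_mul_iff_right (by simpa using ht0) ENNReal.ofReal_ne_top).mp h1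
  have hlim : Tendsto (fun ε : ℝ => ∫⁻ x, ENNReal.ofReal ‖fderiv ℝ f x‖ ∂μ +
      ENNReal.ofReal ε * μ K) (nhdsWithin 0 (Set.Ioi 0))
      (nhds (∫⁻ x, ENNReal.ofReal ‖fderiv ℝ f x‖ ∂μ + ENNReal.ofReal 0 * μ K)) :=
    tendsto_const_nhds.add (ENNReal.Tendsto.mul_const
      ((ENNReal.continuous_ofReal.tendsto 0).mono_left nhdsWithin_le_nhds)
      (Or.inr hKc.measure_lt_top.ne))
  rw [ENNReal.ofReal_zero, zero_mul, add_zero] at hlim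
  exact ge_of_tendsto hlim (eventually_nhdsWithin_of_forall main)

theorem mul_log_le_of_rpow {y N D : ℝ} (hy : 0 ≤ y) (hN : 0 < N) (hD : 1 < D) :
    y * log y ≤ (D - 1) * (y ^ (D / (D - 1)) / N + (log N - 1) * y) := by
  have hD1 : 0 < D - 1 := by linarith
  rcases hy.eq_or_lt with rfl | hy
  · have : D / (D - 1) ≠ 0 := by positivity
    simp [Real.zero_rpow this]
  · have h1 : y ^ (D / (D - 1)) = y ^ (1 / (D - 1)) * y := by
      rw [← Real.rpow_add_one hy.ne']; congr 1; field_simp; ring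
    have h2 : log y = (D - 1) * log (y ^ (1 / (D - 1))) := by
      rw [Real.log_rpow hy]; field_simp
    have hz : 0 < y ^ (1 / (D - 1)) := by positivity
    have h3 := Real.log_le_sub_one_of_pos (div_pos hz hN)
    rw [Real.log_div hz.ne' hN.ne'] at h3
    rw [h1, h2]
    calc _ = (D - 1) * y * log (y ^ (1 / (D - 1))) := by ring
      _ ≤ (D - 1) * y * (y ^ (1 / (D - 1)) / N - 1 + log N) := by gcongr; linarith
      _ = _ := by ring

theorem monC1_eq {n : ℕ} {A : Fin n → ℝ} (h : 0 ≤ (∏ i, Gamma ((A i + 1) / 2)) /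
    (2 ^ monK A * Gamma (1 + monDim A / 2))) :
    monC1 A = (monDim A * ((∏ i, Gamma ((A i + 1) / 2)) /
      (2 ^ monK A * Gamma (1 + monDim A / 2))) ^ (1 / monDim A))⁻¹ := by
  rw [mul_inv, ← Real.inv_rpow h, inv_div, monC1]

/-- the sharp `L¹` logarithmic Sobolev inequality with monomial weights.
(Recall `Real.log 0 = 0`, so `|f| log |f|` vanishes where `f = 0`.) -/
theorem L1_logSobolev_monomial_weight {n : ℕ} (A : Fin n → ℝ) (hA : ∀ i, 0 ≤ A i)
    (hD : 1 < monDim A)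
    (f : EuclideanSpace ℝ (Fin n) → ℝ) (hf : ContDiff ℝ 1 f) (hsupp : HasCompactSupport f)
    (hnorm : ∫ x in monSet A, |f x| * monWeight A x = 1) :
    ∫ x in monSet A, |f x| * log |f x| * monWeight A x ≤
      monDim A * log (monC1 A * ∫ x in monSet A, ‖fderiv ℝ f x‖ * monWeight A x) := by
  have := isLocallyFiniteMeasure_monMeasure hA
  have hD0 : 0 < monDim A := by linarith
  have hD1 : 0 < monDim A - 1 := by linarith
  set β := (∏ i, Gamma ((A i + 1) / 2)) / (2 ^ monK A * Gamma (1 + monDim A / 2)) with hβdef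
  have hβ : 0 < β := by
    have h1 : 0 < Gamma (1 + monDim A / 2) := Real.Gamma_pos_of_pos (by positivity)
    have h2 : 0 < ∏ i, Gamma ((A i + 1) / 2) :=
      Finset.prod_pos fun i _ => Real.Gamma_pos_of_pos (by have := hA i; positivity)
    positivity
  rw [monC1_eq (hβdef ▸ hβ.le), ← hβdef]
  rw [← integral_monMeasure hA] at hnorm
  rw [← integral_monMeasure hA (fun x => |f x| * log |f x|),
    ← integral_monMeasure hA (fun x => ‖fderiv ℝ f x‖)]
  set μ := monMeasure A with hμ
  set D := monDim A with hDdef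
  have hq : 0 < D / (D - 1) := by positivity
  have hcomp : ∀ φ : ℝ → ℝ, Continuous φ → φ 0 = 0 → Integrable (fun x => φ |f x|) μ :=
    fun φ hφ h0 => (hφ.comp hf.continuous.abs).integrable_of_hasCompactSupport
      (hsupp.comp_left (g := fun y => φ |y|) (by simpa using h0))
  have hint1 : Integrable (fun x => |f x|) μ :=
    (hf.continuous.integrable_of_hasCompactSupport hsupp).abs
  have hintq : Integrable (fun x => |f x| ^ (D / (D - 1))) μ :=
    hcomp (fun y => y ^ (D / (D - 1))) (Real.continuous_rpow_const hq.le) (Real.zero_rpow hq.ne')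
  have hintl : Integrable (fun x => |f x| * log |f x|) μ :=
    hcomp (fun y => y * log y) Real.continuous_mul_log (by simp)
  have hintd : Integrable (fun x => ‖fderiv ℝ f x‖) μ :=
    ((hf.continuous_fderiv one_ne_zero).integrable_of_hasCompactSupport (hsupp.fderiv ℝ)).norm
  set N := ∫ x, |f x| ^ (D / (D - 1)) ∂μ with hNdef
  set I := ∫ x, ‖fderiv ℝ f x‖ ∂μ with hIdef
  have hN : 0 < N := by
    refine (integral_nonneg fun x => by positivity).lt_of_ne fun h => ?_
    have h0 := (integral_eq_zero_iff_of_nonneg (fun x => by positivity) hintq).mp h.symm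
    have h1 : ∫ x, |f x| ∂μ = 0 := by
      rw [integral_eq_zero_of_ae]
      filter_upwards [h0] with x hx
      exact (Real.rpow_eq_zero (abs_nonneg _) hq.ne').mp hx
    linarith
  have hNl : ∫⁻ x, ENNReal.ofReal |f x| ^ (D / (D - 1)) ∂μ = ENNReal.ofReal N := by
    rw [ofReal_integral_eq_lintegral_ofReal hintq (Eventually.of_forall fun x => by positivity)]
    exact lintegral_congr fun x => ENNReal.ofReal_rpow_of_nonneg (abs_nonneg _) hq.le
  have hpq : (D / (D - 1)).HolderConjugate D := (Real.HolderConjugate.conjExponent hD).symm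
  have hsob : D * β ^ (1 / D) * N ^ ((D - 1) / D) ≤ I := by
    have h1 := lintegral_rpow_le_lintegral_meas_rpow μ (u := fun x => |f x|)
      hf.continuous.abs.measurable (fun x => abs_nonneg _) hpq
      (by rw [hNl]; simpa using hN) (by rw [hNl]; exact ENNReal.ofReal_ne_top)
    have h2 := lintegral_meas_rpow_le_lintegral_fderiv hA hD hβ
      (monMeasure_unitBall hA hD0) hf hsupp
    rw [hNl, one_div_div, ENNReal.ofReal_rpow_of_pos hN] at h1
    rw [← ofReal_integral_eq_lintegral_ofReal hintd (Eventually.of_forall fun x => norm_nonneg _)]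
      at h2
    have h3 := (mul_le_mul_right h1 (ENNReal.ofReal (D * β ^ (1 / D)))).trans h2
    rw [← ENNReal.ofReal_mul (by positivity)] at h3
    exact (ENNReal.ofReal_le_ofReal_iff (integral_nonneg fun x => norm_nonneg _)).mp h3
  calc ∫ x, |f x| * log |f x| ∂μ
      ≤ ∫ x, (D - 1) * (|f x| ^ (D / (D - 1)) / N + (log N - 1) * |f x|) ∂μ :=
        integral_mono hintl (((hintq.div_const N).add (hint1.const_mul _)).const_mul _)
          fun x => mul_log_le_of_rpow (abs_nonneg _) hN hD
    _ = (D - 1) * log N := by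
        rw [integral_const_mul, integral_add (hintq.div_const N) (hint1.const_mul _),
          integral_div, integral_const_mul, hnorm, ← hNdef, div_self hN.ne']
        ring
    _ = D * log (N ^ ((D - 1) / D)) := by
        rw [Real.log_rpow hN]; field_simp
    _ ≤ D * log ((D * β ^ (1 / D))⁻¹ * I) := by
        gcongr
        rwa [inv_mul_eq_div, le_div_iff₀ (by positivity), mul_comm]
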